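/- Let β be a sincere dimension vector of Q and let α ∈ ℤ^{Q_0} satisfy ⟨α,β⟩ = 0 and ⟨α,β'⟩ ≤ 0 for every dimension vector β' with β' ↪ β (i.e., α ∈ D(β)). Then α(i) ≥ 0 for all i ∈ Q_0, i.e., α is itself a dimension vector. -/

import Mathlib

set_option autoImplicit false

noncomputable section

open scoped BigOperators

/-! Basic setup for representations of a quiver with vertex set `V`, arrow set `A`,
tail map `t` and head map `h`, over a field `K`. -/

variable (K : Type) [Field K]
variable {V A : Type} [Fintype V] [DecidableEq V] [Fintype A]

/-- The Euler form of the quiver `(V, A, t, h)`. -/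
def eulerForm {R : Type} [CommRing R] (t h : A → V) (x y : V → R) : R :=
  ∑ i, x i * y i - ∑ a, x (t a) * y (h a)

def natZ (x : V → ℕ) : V → ℤ := fun i => (x i : ℤ)
def intQ (x : V → ℤ) : V → ℚ := fun i => (x i : ℚ)
def natQ (x : V → ℕ) : V → ℚ := fun i => (x i : ℚ)

/-- The weight `⟨α,·⟩`. -/
def weightL (t h : A → V) (α : V → ℤ) : V → ℤ :=
  fun i => eulerForm t h α (fun j => if j = i then 1 else 0)

/-- The weight `−⟨·,α⟩`. -/
def weightR (t h : A → V) (α : V → ℤ) : V → ℤ :=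
  fun i => - eulerForm t h (fun j => if j = i then 1 else 0) α

/-- `IsPathFrom t h i p j` : the list of arrows `p` is a path from `i` to `j`. -/
def IsPathFrom (t h : A → V) : V → List A → V → Prop
  | i, [], j => i = j
  | i, a :: p, j => t a = i ∧ IsPathFrom t h (h a) p j

/-- The quiver has no (nontrivial) oriented cycles. -/
def Acyclic (t h : A → V) : Prop := ∀ (i : V) (p : List A), IsPathFrom t h i p i → p = []

/-- The dimension vector `γ_i` of the projective indecomposable at `i`:
`γ_i(j)` is the number of paths from `i` to `j`. -/
def gammaRoot (t h : A → V) (i : V) : V → ℕ :=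
  fun j => Set.ncard {p : List A | IsPathFrom t h i p j}

/-- A finite-dimensional representation of the quiver `(V, A, t, h)` over `K`. -/
structure QuivRep (K : Type) [Field K] (V A : Type) (t h : A → V) : Type 1 where
  sp : V → Type
  [inst1 : ∀ i, AddCommGroup (sp i)]
  [inst2 : ∀ i, Module K (sp i)]
  [inst3 : ∀ i, FiniteDimensional K (sp i)]
  map : ∀ a : A, sp (t a) →ₗ[K] sp (h a)

attribute [instance] QuivRep.inst1 QuivRep.inst2 QuivRep.inst3

namespace QuivRep

variable {K} {t h : A → V}

/-- The dimension vector of a representation. -/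
def dimVec (X : QuivRep K V A t h) : V → ℕ := fun i => Module.finrank K (X.sp i)

/-- A subrepresentation. -/
structure Sub (X : QuivRep K V A t h) where
  sub : ∀ i, Submodule K (X.sp i)
  le : ∀ a : A, ∀ x ∈ sub (t a), X.map a x ∈ sub (h a)

/-- The dimension vector of a subrepresentation. -/
def Sub.dimVec {X : QuivRep K V A t h} (U : Sub X) : V → ℕ :=
  fun i => Module.finrank K (U.sub i)

/-- The space `Hom_Q(X,Y)` of morphisms of representations, as a submodule of
`Π i, Hom_K(X(i),Y(i))`. -/
def homS (X Y : QuivRep K V A t h) : Submodule K (∀ i, X.sp i →ₗ[K] Y.sp i) where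
  carrier := {φ | ∀ a : A, (φ (h a)).comp (X.map a) = (Y.map a).comp (φ (t a))}
  zero_mem' := by intro a; simp
  add_mem' := by
    intro f g hf hg a
    simp only [Pi.add_apply, LinearMap.add_comp, LinearMap.comp_add, hf a, hg a]
  smul_mem' := by
    intro c f hf a
    simp only [Pi.smul_apply, LinearMap.smul_comp, LinearMap.comp_smul, hf a]

/-- The dimension of `Hom_Q(X,Y)`. -/
def homDim (X Y : QuivRep K V A t h) : ℕ := Module.finrank K (homS X Y)

/-- The map `d^X_Y` from Ringel's canonical exact sequence. -/
def dmap (X Y : QuivRep K V A t h) :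
    (∀ i, X.sp i →ₗ[K] Y.sp i) →ₗ[K] (∀ a : A, X.sp (t a) →ₗ[K] Y.sp (h a)) where
  toFun φ := fun a => (φ (h a)).comp (X.map a) - (Y.map a).comp (φ (t a))
  map_add' f g := by
    funext a
    simp only [Pi.add_apply, LinearMap.add_comp, LinearMap.comp_add]
    abel
  map_smul' c f := by
    funext a
    simp only [Pi.smul_apply, LinearMap.smul_comp, LinearMap.comp_smul, smul_sub,
      RingHom.id_apply]

/-- The dimension of `Ext^1_Q(X,Y)`, i.e. of the cokernel of `d^X_Y`. -/
def extDim (X Y : QuivRep K V A t h) : ℕ :=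
  Module.finrank K ((∀ a : A, X.sp (t a) →ₗ[K] Y.sp (h a)) ⧸ LinearMap.range (dmap X Y))

/-- A rigid representation: `Ext^1_Q(X,X) = 0`. -/
def IsRigid (X : QuivRep K V A t h) : Prop := extDim X X = 0

/-- A Schur representation: `End_Q(X) = K·id`. -/
def IsSchur (X : QuivRep K V A t h) : Prop := homDim X X = 1

/-- An exceptional representation: rigid and Schur. -/
def IsExceptional (X : QuivRep K V A t h) : Prop := IsRigid X ∧ IsSchur X

end QuivRep

/-- `β` is a real Schur root: the dimension vector of an exceptional representation. -/
def isRealSchurRoot (t h : A → V) (β : V → ℕ) : Prop :=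
  ∃ X : QuivRep K V A t h, X.dimVec = β ∧ X.IsExceptional

/-- `ext_Q(α,β)` : the generic (minimal) value of `dim Ext^1_Q` on pairs of
representations of dimension vectors `α`, `β`. -/
def extMin (t h : A → V) (α β : V → ℕ) : ℕ :=
  sInf {n | ∃ X Y : QuivRep K V A t h, X.dimVec = α ∧ Y.dimVec = β ∧ QuivRep.extDim X Y = n}

/-- `hom_Q(α,β)` : the generic (minimal) value of `dim Hom_Q`. -/
def homMin (t h : A → V) (α β : V → ℕ) : ℕ :=
  sInf {n | ∃ X Y : QuivRep K V A t h, X.dimVec = α ∧ Y.dimVec = β ∧ QuivRep.homDim X Y = n}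

/-- `β' ↪ β` : every representation of dimension vector `β` has a subrepresentation of
dimension vector `β'`. -/
def Embeds (t h : A → V) (β' β : V → ℕ) : Prop :=
  ∀ X : QuivRep K V A t h, X.dimVec = β → ∃ U : QuivRep.Sub X, U.dimVec = β'

/-- `σ`-semi-stability of a representation. -/
def IsSemistable {t h : A → V} (σ : V → ℤ) (X : QuivRep K V A t h) : Prop :=
  (∑ i, σ i * (X.dimVec i : ℤ)) = 0 ∧
  ∀ U : QuivRep.Sub X, (∑ i, σ i * (U.dimVec i : ℤ)) ≤ 0

/-- `σ`-stability of a representation. -/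
def IsStable {t h : A → V} (σ : V → ℤ) (X : QuivRep K V A t h) : Prop :=
  (∑ i, σ i * (X.dimVec i : ℤ)) = 0 ∧ X.dimVec ≠ (fun _ => 0) ∧
  ∀ U : QuivRep.Sub X, U.dimVec ≠ (fun _ => 0) → U.dimVec ≠ X.dimVec →
    (∑ i, σ i * (U.dimVec i : ℤ)) < 0

/-- Isomorphism of representations. -/
def RepIso {t h : A → V} (X Y : QuivRep K V A t h) : Prop :=
  ∃ e : ∀ i, X.sp i ≃ₗ[K] Y.sp i,
    ∀ (a : A) (x : X.sp (t a)), e (h a) (X.map a x) = Y.map a (e (t a) x)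

/-- A quiver exceptional sequence of dimension vectors. -/
def IsQES (t h : A → V) {l : ℕ} (b : Fin l → V → ℕ) : Prop :=
  (∀ j, isRealSchurRoot K t h (b j)) ∧
  ∀ i j : Fin l, i < j →
    homMin K t h (b i) (b j) = 0 ∧ extMin K t h (b i) (b j) = 0 ∧
      eulerForm t h (natZ (b j)) (natZ (b i)) ≤ 0

/-- The cone of nonnegative rational linear combinations of a finite set of integral
vectors. -/
def coneOf (C : Finset (V → ℤ)) : Set (V → ℚ) :=
  {x | ∃ lam : (V → ℤ) → ℚ, (∀ c, 0 ≤ lam c) ∧ x = ∑ c ∈ C, lam c • intQ c}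

/-- A compatible subset of the set `Ψ(Q)_{≥ -1}` of almost positive real Schur roots. -/
def IsCompatible (t h : A → V) (C : Finset (V → ℤ)) : Prop :=
  (∀ x ∈ C, (∃ β : V → ℕ, isRealSchurRoot K t h β ∧ x = natZ β) ∨
      (∃ i : V, x = fun j => -(gammaRoot t h i j : ℤ))) ∧
  (∀ x ∈ C, ∀ y ∈ C, x ≠ y →
    (∀ β₁ β₂ : V → ℕ, isRealSchurRoot K t h β₁ → isRealSchurRoot K t h β₂ →
      x = natZ β₁ → y = natZ β₂ → extMin K t h β₁ β₂ = 0) ∧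
    (∀ (β : V → ℕ) (i : V), isRealSchurRoot K t h β →
      x = natZ β → y = (fun j => -(gammaRoot t h i j : ℤ)) → β i = 0))

/-- The domain of semi-invariants `D(β) ⊆ ℚ^{Q_0}`. -/
def Dom (t h : A → V) (β : V → ℕ) : Set (V → ℚ) :=
  {x | eulerForm t h x (natQ β) = 0 ∧
    ∀ β' : V → ℕ, Embeds K t h β' β → eulerForm t h x (natQ β') ≤ 0}

/-- A quiver exceptional set: a subset of `Ψ(Q)_{≥ -1}` of the form
`{β_1,…,β_l, −γ_{i_{l+1}},…,−γ_{i_m}}` with `β_j(i_k) = 0` and whose real-Schur-root part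
can be ordered into a quiver exceptional sequence. -/
def IsQExcSet (t h : A → V) (E : Finset (V → ℤ)) : Prop :=
  ∃ (l m : ℕ) (b : Fin l → V → ℕ) (g : Fin m → V),
    Function.Injective b ∧ Function.Injective g ∧ IsQES K t h b ∧
    (∀ j k, b j (g k) = 0) ∧
    (E : Set (V → ℤ)) =
      (Set.range fun j => natZ (b j)) ∪
      (Set.range fun k => (fun v => -(gammaRoot t h (g k) v : ℤ)))


/-- The underlying graph of the quiver is connected. -/
def IsConnectedQuiver (t h : A → V) : Prop :=
  ∀ i j : V,
    Relation.ReflTransGen (fun u v => ∃ a, (t a = u ∧ h a = v) ∨ (t a = v ∧ h a = u)) i j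

/-- Morphisms of representations. -/
structure RepHom {K : Type} [Field K] {V A : Type} {t h : A → V}
    (X Y : QuivRep K V A t h) : Type where
  app : ∀ i, X.sp i →ₗ[K] Y.sp i
  comm : ∀ a : A, (app (h a)).comp (X.map a) = (Y.map a).comp (app (t a))

namespace RepHom

variable {K₀ : Type} [Field K₀] {t h : A → V}

/-- The identity morphism. -/
def idHom (X : QuivRep K₀ V A t h) : RepHom X X :=
  ⟨fun _ => LinearMap.id, fun a => by ext x; simp⟩

/-- Composition of morphisms. -/
def comp {X Y Z : QuivRep K₀ V A t h} (f : RepHom X Y) (g : RepHom Y Z) : RepHom X Z :=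
  ⟨fun i => (g.app i).comp (f.app i), fun a => by
    ext x
    have hf := LinearMap.congr_fun (f.comm a) x
    have hg := LinearMap.congr_fun (g.comm a) (f.app (t a) x)
    simp only [LinearMap.comp_apply] at hf hg ⊢
    rw [hf, hg]⟩

/-- Sum of morphisms. -/
def add {X Y : QuivRep K₀ V A t h} (f g : RepHom X Y) : RepHom X Y :=
  ⟨fun i => f.app i + g.app i, fun a => by
    simp only [LinearMap.add_comp, LinearMap.comp_add, f.comm a, g.comm a]⟩

/-- Scalar multiple of a morphism. -/
def smul {X Y : QuivRep K₀ V A t h} (c : K₀) (f : RepHom X Y) : RepHom X Y :=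
  ⟨fun i => c • f.app i, fun a => by
    simp only [LinearMap.smul_comp, LinearMap.comp_smul, f.comm a]⟩

end RepHom

/-- The number of arrows `i → j` in the Ext-quiver `Q(𝓔)` of a sequence of dimension
vectors: `−⟨β_i, β_j⟩` for `i ≠ j`. -/
def extMult (t h : A → V) {l : ℕ} (b : Fin l → V → ℕ) (i j : Fin l) : ℕ :=
  if i = j then 0 else (-(eulerForm t h (natZ (b i)) (natZ (b j)))).toNat

/-- The arrow set of the Ext-quiver `Q(𝓔)`. -/
abbrev ExtArrow (t h : A → V) {l : ℕ} (b : Fin l → V → ℕ) : Type :=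
  (i : Fin l) × (j : Fin l) × Fin (extMult t h b i j)

/-- The representation space `rep(Q,β)` as a product of matrix spaces. -/
abbrev RepSpace (t h : A → V) (β : V → ℕ) : Type :=
  ∀ a : A, Matrix (Fin (β (h a))) (Fin (β (t a))) K

/-- The (base-change) action of `GL(β)` on `rep(Q,β)`. -/
def glAct (t h : A → V) {β : V → ℕ}
    (g : ∀ i, Matrix.GeneralLinearGroup (Fin (β i)) K) (W : RepSpace K t h β) :
    RepSpace K t h β :=
  fun a => (g (h a) : Matrix (Fin (β (h a))) (Fin (β (h a))) K) * W a *
    (((g (t a))⁻¹ : Matrix.GeneralLinearGroup (Fin (β (t a))) K) :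
      Matrix (Fin (β (t a))) (Fin (β (t a))) K)

/-- A polynomial function on `rep(Q,β)`. -/
def IsPolyFun (t h : A → V) {β : V → ℕ} (f : RepSpace K t h β → K) : Prop :=
  ∃ P : MvPolynomial ((a : A) × (Fin (β (h a)) × Fin (β (t a)))) K,
    ∀ W, f W = MvPolynomial.eval (fun x => W x.1 x.2.1 x.2.2) P

/-- The weight space `SI(Q,β)_σ` of semi-invariant polynomial functions of weight `σ`. -/
def SIweight (t h : A → V) (β : V → ℕ) (σ : V → ℤ) :
    Submodule K (RepSpace K t h β → K) where
  carrier := {f | IsPolyFun K t h f ∧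
    ∀ (g : ∀ i, Matrix.GeneralLinearGroup (Fin (β i)) K) (W : RepSpace K t h β),
      f (glAct K t h g W) =
        (((∏ i, (Matrix.GeneralLinearGroup.det (g i)) ^ σ i : Kˣ) : K)) * f W}
  zero_mem' := by
    refine ⟨⟨0, by simp⟩, by simp⟩
  add_mem' := by
    rintro f g ⟨⟨P, hP⟩, hf⟩ ⟨⟨Q, hQ⟩, hg⟩
    refine ⟨⟨P + Q, fun W => ?_⟩, fun gg W => ?_⟩
    · simp [hP W, hQ W]
    · simp only [Pi.add_apply, hf gg W, hg gg W]; ring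
  smul_mem' := by
    rintro c f ⟨⟨P, hP⟩, hf⟩
    refine ⟨⟨MvPolynomial.C c * P, fun W => ?_⟩, fun gg W => ?_⟩
    · simp [hP W]
    · simp only [Pi.smul_apply, hf gg W, smul_eq_mul]; ring

/-- Entry of a matrix accessed through natural-number indices. -/
def entryN {m n : ℕ} (M : Matrix (Fin m) (Fin n) K) (r c : ℕ) : K :=
  if hr : r < m then (if hc : c < n then M ⟨r, hr⟩ ⟨c, hc⟩ else 0) else 0

/-- The matrix of the map `d^V_W` (with `V` of dimension vector `α` varying and `W` of
dimension vector `w` fixed), in the standard bases. -/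
def schofieldMatrix (t h : A → V) {α w : V → ℕ}
    (Vm : RepSpace K t h α) (W : RepSpace K t h w) :
    Matrix ((a : A) × (Fin (w (h a)) × Fin (α (t a)))) ((i : V) × (Fin (w i) × Fin (α i))) K :=
  fun r c =>
    (if c.1 = h r.1 ∧ (c.2.1 : ℕ) = (r.2.1 : ℕ) then
      entryN K (Vm r.1) (c.2.2 : ℕ) (r.2.2 : ℕ) else 0)
    - (if c.1 = t r.1 ∧ (c.2.2 : ℕ) = (r.2.2 : ℕ) then
      entryN K (W r.1) (r.2.1 : ℕ) (c.2.1 : ℕ) else 0)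

/-- The Schofield semi-invariant `c_W : rep(Q,α) → K`, `V ↦ det d^V_W` (defined when
`⟨α, dim W⟩ = 0`, i.e. when `d^V_W` is a square matrix). -/
def schofieldSI (t h : A → V) {α w : V → ℕ} (W : RepSpace K t h w)
    (Vm : RepSpace K t h α) : K :=
  if hc : Fintype.card ((i : V) × (Fin (w i) × Fin (α i))) =
      Fintype.card ((a : A) × (Fin (w (h a)) × Fin (α (t a)))) then
    ((schofieldMatrix K t h Vm W).submatrix (Fintype.equivOfCardEq hc) id).det
  else 0

/-- The representation of `Q` attached to a point of `rep(Q,β)`. -/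
def toRep (t h : A → V) {β : V → ℕ} (W : RepSpace K t h β) : QuivRep K V A t h where
  sp i := Fin (β i) → K
  map a := Matrix.mulVecLin (W a)

/-!
Let `i` be a vertex such that `α j ≥ 0` for all proper predecessors `j` of `i`. Define `m` by
`m i = β i` and `m j = min (β j) (∑_{a : j → k} m k)` for `j ≠ i`, which makes sense because there
are no oriented cycles. By rank–nullity every representation of dimension vector `β` has a
subrepresentation of dimension vector `β - m`, built vertex by vertex from the sinks upwards. Hence
`⟨α, m⟩ = ⟨α, β⟩ - ⟨α, β - m⟩ ≥ 0`. On the other hand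
`⟨α, m⟩ = ∑ j, α j * (m j - ∑_{a : j → k} m k)`, where the summand at `i` is `α i * β i`,
the summands at proper predecessors of `i` are nonpositive, and all others vanish. So
`α i * β i ≥ 0`, and the claim follows by induction along the arrows.
-/

section WellFounded

theorem wellFounded_of_forall_not_transGen_self {ι : Type*} [Finite ι] {r : ι → ι → Prop}
    (hr : ∀ i, ¬ Relation.TransGen r i i) : WellFounded r :=
  haveI : Std.Irrefl (Relation.TransGen r) := ⟨hr⟩
  Subrelation.wf Relation.TransGen.single
    (Finite.wellFounded_of_trans_of_irrefl (Relation.TransGen r))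

theorem exists_forall_of_wellFounded {ι : Sort*} {r : ι → ι → Prop} (hr : WellFounded r)
    {C : ι → Sort*} {P : ∀ j, (∀ k, r k j → C k) → C j → Prop} (hP : ∀ j f, ∃ x, P j f x) :
    ∃ F : ∀ j, C j, ∀ j, P j (fun k _ => F k) (F j) := by
  choose g hg using hP
  refine ⟨hr.fix g, fun j => ?_⟩
  rw [hr.fix_eq]
  exact hg j _

end WellFounded

section LinearAlgebra

theorem exists_submodule_le_finrank_eq {R E : Type*} [Ring R] [StrongRankCondition R]
    [AddCommGroup E] [Module R E]
    (W : Submodule R E) {n : ℕ} (hn : n ≤ Module.finrank R W) :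
    ∃ U ≤ W, Module.finrank R U = n := by
  have := nontrivial_of_invariantBasisNumber R
  obtain ⟨v, hv⟩ := exists_linearIndependent_of_le_finrank hn
  refine ⟨(Submodule.span R (Set.range v)).map W.subtype, Submodule.map_subtype_le W _, ?_⟩
  rw [Submodule.finrank_map_subtype_eq, finrank_span_eq_card hv, Fintype.card_fin]

theorem finrank_le_finrank_iInf_comap_add {R ι E : Type*} {F : ι → Type*} [DivisionRing R]
    [Fintype ι] [AddCommGroup E] [Module R E] [FiniteDimensional R E]
    [∀ k, AddCommGroup (F k)] [∀ k, Module R (F k)] [∀ k, FiniteDimensional R (F k)]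
    (f : ∀ k, E →ₗ[R] F k) (U : ∀ k, Submodule R (F k)) :
    Module.finrank R E ≤ Module.finrank R (⨅ k, (U k).comap (f k) : Submodule R E) +
      ∑ k, Module.finrank R (F k ⧸ U k) := by
  let L : E →ₗ[R] ∀ k, F k ⧸ U k := LinearMap.pi fun k => (U k).mkQ ∘ₗ f k
  have hker : LinearMap.ker L = ⨅ k, (U k).comap (f k) := by
    simp only [L, LinearMap.ker_pi, LinearMap.ker_comp, Submodule.ker_mkQ]
  calc Module.finrank R E
      = Module.finrank R (LinearMap.ker L) + Module.finrank R (LinearMap.range L) := by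
        rw [add_comm, L.finrank_range_add_finrank_ker]
    _ ≤ Module.finrank R (LinearMap.ker L) + Module.finrank R (∀ k, F k ⧸ U k) := by
        gcongr
        exact Submodule.finrank_le _
    _ = _ := by rw [hker, Module.finrank_pi_fintype]

end LinearAlgebra

section Arrows

omit [Fintype V] [DecidableEq V] [Fintype A]

variable {t h : A → V}

/-- `HasArrow t h j k`: some arrow goes from `j` to `k`. Its transitive closure is the relation
"`j` is a proper predecessor of `k`", along which the sign of `α` is propagated. -/
def HasArrow (t h : A → V) (j k : V) : Prop := ∃ a, t a = j ∧ h a = k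

theorem exists_isPathFrom_of_transGen {i j : V} (hij : Relation.TransGen (HasArrow t h) i j) :
    ∃ p ≠ [], IsPathFrom t h i p j := by
  induction hij using Relation.TransGen.head_induction_on with
  | single hik =>
    obtain ⟨a, rfl, rfl⟩ := hik
    exact ⟨[a], List.cons_ne_nil _ _, rfl, rfl⟩
  | head hik _ ih =>
    obtain ⟨a, rfl, rfl⟩ := hik
    obtain ⟨p, -, hp⟩ := ih
    exact ⟨a :: p, List.cons_ne_nil _ _, rfl, hp⟩

theorem Acyclic.not_transGen_self (hQ : Acyclic t h) (i : V) :
    ¬ Relation.TransGen (HasArrow t h) i i := by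
  intro hi
  obtain ⟨p, hp, hpath⟩ := exists_isPathFrom_of_transGen hi
  exact hp (hQ i p hpath)

theorem Acyclic.wellFounded_hasArrow [Finite V] (hQ : Acyclic t h) : WellFounded (HasArrow t h) :=
  wellFounded_of_forall_not_transGen_self hQ.not_transGen_self

theorem Acyclic.wellFounded_swap_hasArrow [Finite V] (hQ : Acyclic t h) :
    WellFounded (Function.swap (HasArrow t h)) :=
  wellFounded_of_forall_not_transGen_self fun i hi =>
    hQ.not_transGen_self i (Relation.transGen_swap.mp hi)

end Arrows

section Subrepresentations

omit [Fintype V]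

variable {K} {t h : A → V}

/-- The structure map of `a`, with its source written as `X(j)` for a vertex `j` that equals `t a`
only propositionally; this lets all arrows leaving `j` act on one and the same space. -/
def QuivRep.mapFrom (X : QuivRep K V A t h) {j : V} {a : A} (ha : t a = j) :
    X.sp j →ₗ[K] X.sp (h a) :=
  ha ▸ X.map a

theorem QuivRep.exists_sub_dimVec_eq [Finite V] (hQ : Acyclic t h) (X : QuivRep K V A t h)
    {m : V → ℕ} (hm : ∀ j, min (X.dimVec j) (∑ a : {a // t a = j}, m (h a)) ≤ m j) :
    ∃ U : X.Sub, U.dimVec = X.dimVec - m := by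
  obtain ⟨U, hU⟩ := exists_forall_of_wellFounded hQ.wellFounded_swap_hasArrow
    (C := fun j => Submodule K (X.sp j))
    (P := fun j U' Uj =>
      let W := ⨅ a : {a // t a = j}, (U' (h a) ⟨a, a.2, rfl⟩).comap (X.mapFrom a.2)
      Uj ≤ W ∧ Module.finrank K Uj = min (X.dimVec j - m j) (Module.finrank K W))
    fun j U' => exists_submodule_le_finrank_eq _ (min_le_right _ _)
  have finrank_U (j : V) : Module.finrank K (U j) = X.dimVec j - m j := by
    induction j using hQ.wellFounded_swap_hasArrow.induction with
    | _ j ih =>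
    have codim_le (a : {a // t a = j}) : Module.finrank K (X.sp (h a) ⧸ U (h a)) ≤ m (h a) := by
      rw [Submodule.finrank_quotient, ih (h a) ⟨a, a.2, rfl⟩]
      exact tsub_tsub_le
    have dim_le := (finrank_le_finrank_iInf_comap_add
      (fun a : {a // t a = j} => X.mapFrom a.2) fun a => U (h a)).trans
        (Nat.add_le_add_left (Finset.sum_le_sum fun a _ => codim_le a) _)
    rw [(hU j).2, min_eq_left]
    have hmj := hm j
    simp only [QuivRep.dimVec] at hmj ⊢
    omega
  exact ⟨⟨U, fun a x hx => (Submodule.mem_iInf _).mp ((hU (t a)).1 hx) ⟨a, rfl⟩⟩,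
    funext finrank_U⟩

theorem embeds_sub [Finite V] (hQ : Acyclic t h) {β m : V → ℕ}
    (hm : ∀ j, min (β j) (∑ a : {a // t a = j}, m (h a)) ≤ m j) : Embeds K t h (β - m) β := by
  rintro X rfl
  exact X.exists_sub_dimVec_eq hQ hm

end Subrepresentations

section EulerForm

variable {R : Type} [CommRing R]

theorem eulerForm_eq_sum_mul_sub (t h : A → V) (x y : V → R) :
    eulerForm t h x y = ∑ j, x j * (y j - ∑ a : {a // t a = j}, y (h a)) := by
  have sum_fiber : ∑ j, ∑ a : {a // t a = j}, x j * y (h a) = ∑ a, x (t a) * y (h a) := by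
    rw [← Fintype.sum_fiberwise t]
    refine Finset.sum_congr rfl fun j _ => Finset.sum_congr rfl fun a _ => ?_
    rw [a.2]
  simp only [eulerForm, mul_sub, Finset.sum_sub_distrib, Finset.mul_sum, sum_fiber]

omit [DecidableEq V] in
theorem eulerForm_sub_right (t h : A → V) (x y z : V → R) :
    eulerForm t h x (y - z) = eulerForm t h x y - eulerForm t h x z := by
  simp only [eulerForm, Pi.sub_apply, mul_sub, Finset.sum_sub_distrib]
  ring

end EulerForm

section CogenBound

omit [Fintype V]

variable [Finite V] {t h : A → V} (hQ : Acyclic t h) (β : V → ℕ) (i : V)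

/-- The largest dimension vector that rank considerations allow for a representation bounded by `β`
whose space at `i` has dimension `β i` and whose maps out of any other vertex are jointly
injective: the vector `m` with `m i = β i` and `m j = min (β j) (∑_{a : j → k} m k)` for `j ≠ i`. -/
def cogenBound : V → ℕ :=
  hQ.wellFounded_swap_hasArrow.fix fun j m =>
    if j = i then β i else min (β j) (∑ a : {a // t a = j}, m (h a) ⟨a, a.2, rfl⟩)

theorem cogenBound_eq_ite (j : V) :
    cogenBound hQ β i j =
      if j = i then β i else min (β j) (∑ a : {a // t a = j}, cogenBound hQ β i (h a)) :=
  hQ.wellFounded_swap_hasArrow.fix_eq _ j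

theorem cogenBound_self : cogenBound hQ β i i = β i := by
  rw [cogenBound_eq_ite, if_pos rfl]

variable {i} in
theorem cogenBound_of_ne {j : V} (hj : j ≠ i) :
    cogenBound hQ β i j = min (β j) (∑ a : {a // t a = j}, cogenBound hQ β i (h a)) := by
  rw [cogenBound_eq_ite, if_neg hj]

theorem cogenBound_le : cogenBound hQ β i ≤ β := by
  intro j
  obtain rfl | hj := eq_or_ne j i
  · exact (cogenBound_self hQ β j).le
  · exact (cogenBound_of_ne hQ β hj).trans_le (min_le_left _ _)

theorem min_sum_cogenBound_le (j : V) :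
    min (β j) (∑ a : {a // t a = j}, cogenBound hQ β i (h a)) ≤ cogenBound hQ β i j := by
  obtain rfl | hj := eq_or_ne j i
  · exact (min_le_left _ _).trans (cogenBound_self hQ β j).ge
  · exact (cogenBound_of_ne hQ β hj).ge

variable {β i}

theorem reflTransGen_of_cogenBound_ne_zero {j : V} (hj : cogenBound hQ β i j ≠ 0) :
    Relation.ReflTransGen (HasArrow t h) j i := by
  induction j using hQ.wellFounded_swap_hasArrow.induction with
  | _ j ih =>
  obtain rfl | hji := eq_or_ne j i
  · exact .refl
  have sum_ne_zero : ∑ a : {a // t a = j}, cogenBound hQ β i (h a) ≠ 0 := by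
    have bound_eq := cogenBound_of_ne hQ β hji
    omega
  obtain ⟨a, -, ha⟩ := Finset.exists_ne_zero_of_sum_ne_zero sum_ne_zero
  have hja : HasArrow t h j (h a) := ⟨a, a.2, rfl⟩
  exact .head hja (ih (h a) hja ha)

theorem sum_cogenBound_eq_zero {j : V} (hj : ¬ Relation.TransGen (HasArrow t h) j i) :
    ∑ a : {a // t a = j}, cogenBound hQ β i (h a) = 0 := by
  refine Finset.sum_eq_zero fun a _ => ?_
  by_contra ha
  exact hj (.head' ⟨a, a.2, rfl⟩ (reflTransGen_of_cogenBound_ne_zero hQ ha))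

end CogenBound

theorem eulerForm_cogenBound_le {R : Type} [CommRing R] [PartialOrder R] [IsOrderedRing R]
    {t h : A → V} (hQ : Acyclic t h) {β : V → ℕ} {i : V} {α : V → R}
    (hα : ∀ j, Relation.TransGen (HasArrow t h) j i → 0 ≤ α j) :
    eulerForm t h α (fun j => (cogenBound hQ β i j : R)) ≤ α i * β i := by
  calc eulerForm t h α (fun j => (cogenBound hQ β i j : R))
      = ∑ j, α j * ((cogenBound hQ β i j : R) -
          (∑ a : {a // t a = j}, cogenBound hQ β i (h a) : ℕ)) := by
        simp only [eulerForm_eq_sum_mul_sub, Nat.cast_sum]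
    _ ≤ ∑ j, if j = i then α i * β i else 0 := Finset.sum_le_sum fun j _ => ?_
    _ = α i * β i := by rw [Finset.sum_ite_eq' Finset.univ, if_pos (Finset.mem_univ i)]
  split_ifs with hji
  · subst hji
    rw [cogenBound_self, sum_cogenBound_eq_zero hQ (hQ.not_transGen_self j), Nat.cast_zero,
      sub_zero]
  have bound_le_sum := (cogenBound_of_ne hQ β hji).trans_le (min_le_right _ _)
  by_cases hpred : Relation.TransGen (HasArrow t h) j i
  · exact mul_nonpos_of_nonneg_of_nonpos (hα j hpred)
      (sub_nonpos.mpr (Nat.mono_cast bound_le_sum))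
  · rw [sum_cogenBound_eq_zero hQ hpred] at bound_le_sum ⊢
    rw [Nat.le_zero.mp bound_le_sum, sub_self, mul_zero]

omit [DecidableEq V] in
theorem stmt19_general {R : Type} [CommRing R] [LinearOrder R] [IsStrictOrderedRing R]
    {t h : A → V} (hQ : Acyclic t h) {β : V → ℕ} (hsinc : ∀ i, 0 < β i) {α : V → R}
    (hβ : eulerForm t h α (fun j => (β j : R)) = 0)
    (hsub : ∀ β' : V → ℕ, Embeds K t h β' β → eulerForm t h α (fun j => (β' j : R)) ≤ 0) :
    ∀ i, 0 ≤ α i := by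
  classical
  intro i
  induction i using hQ.wellFounded_hasArrow.transGen.induction with
  | _ i ih =>
  have cast_sub : (fun j => ((β - cogenBound hQ β i) j : R)) =
      (fun j => (β j : R)) - fun j => (cogenBound hQ β i j : R) :=
    funext fun j => Nat.cast_sub (cogenBound_le hQ β i j)
  have cogenBound_nonneg := hsub _ (embeds_sub hQ (min_sum_cogenBound_le hQ β i))
  rw [cast_sub, eulerForm_sub_right, hβ, zero_sub, neg_nonpos] at cogenBound_nonneg
  have αβ_nonneg : 0 ≤ α i * β i := cogenBound_nonneg.trans (eulerForm_cogenBound_le hQ ih)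
  exact nonneg_of_mul_nonneg_left αβ_nonneg (Nat.cast_pos.mpr (hsinc i))

/-- If `β` is sincere and `α ∈ D(β) ∩ ℤ^{Q_0}` then `α` is a dimension
vector. -/
theorem stmt19 [IsAlgClosed K] [CharZero K] (t h : A → V) (hQ : Acyclic t h)
    (β : V → ℕ) (hsinc : ∀ i, 0 < β i) (α : V → ℤ)
    (h1 : eulerForm t h α (natZ β) = 0)
    (h2 : ∀ β' : V → ℕ, Embeds K t h β' β → eulerForm t h α (natZ β') ≤ 0) :
    ∀ i, 0 ≤ α i :=
  stmt19_general K hQ hsinc h1 h2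

end
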